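/- arXiv:0806.3874 — 4 statements merged into one kernel-verified Lean document; each statement's English description precedes it below -/
import Mathlib

section
/- Let t ≤ t' be integers, let L₁ be a generic element of K_{t,⪰} and L₂ a generic element of K_{t',⪰}. Then Ker M_{⌊t/2⌋}(L₁) ⊆ Ker M_{⌊t'/2⌋}(L₂); i.e. with N_t denoting the common kernel of generic elements of K_{t,⪰}, one has N_t ⊆ N_{t'} whenever t ≤ t'. -/
open MvPolynomial

noncomputable section

/-- The polynomial ring `ℝ[x₁,…,xₙ]`. -/
abbrev MP (n : ℕ) := MvPolynomial (Fin n) ℝ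

/-- The total degree `|α|` of a monomial exponent `α`. -/
def mdeg {n : ℕ} (α : Fin n →₀ ℕ) : ℕ := α.sum fun _ e => e

/-- The subspace `ℝ[x]_t` of polynomials of total degree at most `t`. -/
abbrev RxT (n t : ℕ) : Submodule ℝ (MP n) := restrictTotalDegree (Fin n) ℝ t

/-- The kernel of the moment matrix `M_s(L)`: polynomials `p` of degree at most `s` such that
`L(p·x^β) = 0` for all monomials `x^β` of degree at most `s`. -/
def momKer {n : ℕ} (L : Module.Dual ℝ (MP n)) (s : ℕ) : Set (MP n) :=
  {p | p.totalDegree ≤ s ∧ ∀ β : Fin n →₀ ℕ, mdeg β ≤ s → L (p * monomial β 1) = 0}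

/-- Positive semidefiniteness of the moment matrix `M_t(L)`: `L(p²) ≥ 0` for all `p ∈ ℝ[x]_t`. -/
def momPSD {n : ℕ} (L : Module.Dual ℝ (MP n)) (t : ℕ) : Prop :=
  ∀ p : MP n, p.totalDegree ≤ t → 0 ≤ L (p * p)

/-- The bilinear/moment form of order `s` associated to `L`, as a map `ℝ[x]_s → (ℝ[x]_s)*`;
its matrix in the monomial basis is the moment matrix `M_s(L)`. -/
def momBil {n : ℕ} (L : Module.Dual ℝ (MP n)) (s : ℕ) :
    RxT n s →ₗ[ℝ] Module.Dual ℝ (RxT n s) :=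
  LinearMap.mk₂ ℝ (fun p q => L ((p : MP n) * (q : MP n)))
    (fun p p' q => by simp [add_mul])
    (fun c p q => by simp [smul_mul_assoc])
    (fun p q q' => by simp [mul_add])
    (fun c p q => by simp [mul_smul_comm])

/-- The rank of the moment matrix `M_s(L)`. -/
def momRank {n : ℕ} (L : Module.Dual ℝ (MP n)) (s : ℕ) : ℕ :=
  Module.finrank ℝ (LinearMap.range (momBil L s))

/-- The column of the moment matrix `M_s(L)` indexed by the monomial `β`. -/
def momCol {n : ℕ} (L : Module.Dual ℝ (MP n)) (s : ℕ) (β : Fin n →₀ ℕ) :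
    {α : Fin n →₀ ℕ // mdeg α ≤ s} → ℝ :=
  fun α => L (monomial (α.1 + β) 1)

/-- `G^⊥`: linear functionals vanishing on the set `G`. -/
def annih {n : ℕ} (G : Set (MP n)) : Submodule ℝ (Module.Dual ℝ (MP n)) :=
  (Submodule.span ℝ G).dualAnnihilator

/-- The projection `π_s` sending a linear functional to its restriction to `ℝ[x]_s`. -/
def projDual (n s : ℕ) : Module.Dual ℝ (MP n) →ₗ[ℝ] Module.Dual ℝ (RxT n s) :=
  (RxT n s).subtype.dualMap

/-- `dim π_s(G^⊥)`. -/
def dimProj {n : ℕ} (s : ℕ) (G : Set (MP n)) : ℕ :=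
  Module.finrank ℝ (Submodule.map (projDual n s) (annih G))

/-- The one-degree prolongation `S⁺ = S ∪ x₁S ∪ … ∪ xₙS` of a set of polynomials. -/
def plusOp {n : ℕ} (G : Set (MP n)) : Set (MP n) :=
  G ∪ ⋃ i : Fin n, (fun p => X i * p) '' G

/-- The set `H_t = {x^α h_j : |α| + deg h_j ≤ t}` of prolongations of the generators. -/
def Hset {n m : ℕ} (h : Fin m → MP n) (t : ℕ) : Set (MP n) :=
  {p | ∃ (α : Fin n →₀ ℕ) (j : Fin m), mdeg α + (h j).totalDegree ≤ t ∧ p = monomial α 1 * h j}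

/-- The cone `K_{t,⪰}` of linear functionals vanishing on `H_t` with `M_{⌊t/2⌋}(L) ⪰ 0`. -/
def Kpos {n m : ℕ} (h : Fin m → MP n) (t : ℕ) : Set (Module.Dual ℝ (MP n)) :=
  {L | (∀ g ∈ Hset h t, L g = 0) ∧ momPSD L (t / 2)}

/-- `L*` is generic in `K_{t,⪰}`: it belongs to `K_{t,⪰}` and its moment matrix
`M_{⌊t/2⌋}(L*)` has maximum rank over `K_{t,⪰}`. -/
def Generic {n m : ℕ} (h : Fin m → MP n) (t : ℕ) (Ls : Module.Dual ℝ (MP n)) : Prop :=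
  Ls ∈ Kpos h t ∧ ∀ L ∈ Kpos h t, momRank L (t / 2) ≤ momRank Ls (t / 2)

/-- `W_t = {x^α g : |α| ≤ ⌊t/2⌋, g ∈ N_t}`, with `N_t = Ker M_{⌊t/2⌋}(L*)` for `L*` generic. -/
def Wset {n m : ℕ} (h : Fin m → MP n) (t : ℕ) (Ls : Module.Dual ℝ (MP n)) : Set (MP n) :=
  {p | ∃ (α : Fin n →₀ ℕ) (g : MP n), mdeg α ≤ t / 2 ∧ g ∈ momKer Ls (t / 2) ∧
    p = monomial α 1 * g}

/-- The real radical `√[ℝ]I` of an ideal `I`. -/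
def realRad {n : ℕ} (I : Ideal (MP n)) : Set (MP n) :=
  {p | ∃ m : ℕ, 0 < m ∧ ∃ (k : ℕ) (q : Fin k → MP n), p ^ (2 * m) + ∑ j, q j ^ 2 ∈ I}

/-- A set of monomials closed under taking divisions. -/
def DivClosed {n : ℕ} (B : Set (Fin n →₀ ℕ)) : Prop :=
  ∀ a ∈ B, ∀ a' : Fin n →₀ ℕ, a' ≤ a → a' ∈ B

/-- A set of monomials connected to 1: each `m ∈ B` is a product `m = m₁⋯m_k` with `m₁ = 1`
and all partial products `m₁⋯m_h ∈ B` (written additively on exponents). -/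
def ConnectedToOne {n : ℕ} (B : Set (Fin n →₀ ℕ)) : Prop :=
  ∀ a ∈ B, ∃ (k : ℕ) (c : Fin (k + 1) → (Fin n →₀ ℕ)),
    c 0 = 0 ∧ (∀ j : Fin (k + 1), (∑ i ∈ Finset.univ.filter (· ≤ j), c i) ∈ B) ∧
    (∑ i, c i) = a

/-- `Span_ℝ(B)` for a set `B` of monomials. -/
def spanMon {n : ℕ} (B : Set (Fin n →₀ ℕ)) : Submodule ℝ (MP n) :=
  Submodule.span ℝ ((fun a => (monomial a 1 : MP n)) '' B)

/-- The border `∂B = B⁺ \ B` of a set of monomials. -/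
def borderSet {n : ℕ} (B : Set (Fin n →₀ ℕ)) : Set (Fin n →₀ ℕ) :=
  {a | a ∉ B ∧ ∃ i : Fin n, ∃ b ∈ B, a = b + Finsupp.single i 1}

end
theorem momPSD_zero {n : ℕ} {L : Module.Dual ℝ (MP n)} {s : ℕ} (hL : momPSD L s) {p q : MP n}
    (hp : p.totalDegree ≤ s) (hq : q.totalDegree ≤ s) (h0 : L (p * p) = 0) : L (p * q) = 0 := by
  have key : ∀ c : ℝ, 0 ≤ 2 * c * L (p * q) + L (q * q) := by
    intro c
    have h1 : (c • p + q).totalDegree ≤ s :=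
      (totalDegree_add _ _).trans (max_le ((totalDegree_smul_le _ _).trans hp) hq)
    have h2 := hL _ h1
    have h3 : (c • p + q) * (c • p + q) = (c * c) • (p * p) + (2 * c) • (p * q) + q * q := by
      simp only [MvPolynomial.smul_eq_C_mul, map_mul, map_ofNat]
      ring
    rw [h3] at h2
    simpa [h0] using h2
  by_contra hne
  have := key (-(L (q * q) + 1) / (2 * L (p * q)))
  have h4 : 2 * (-(L (q * q) + 1) / (2 * L (p * q))) * L (p * q) = -(L (q * q) + 1) := by
    field_simp
  linarith

theorem totalDegree_monomial_of_mdeg {n : ℕ} {β : Fin n →₀ ℕ} {s : ℕ} (hβ : mdeg β ≤ s) :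
    (monomial β (1 : ℝ)).totalDegree ≤ s :=
  (totalDegree_monomial_le β 1).trans hβ

theorem momBil_apply' {n : ℕ} (L : Module.Dual ℝ (MP n)) (s : ℕ) (p q : RxT n s) :
    momBil L s p q = L ((p : MP n) * (q : MP n)) := rfl

theorem mem_ker_momBil {n : ℕ} {L : Module.Dual ℝ (MP n)} {s : ℕ} (hL : momPSD L s)
    (p : RxT n s) : p ∈ LinearMap.ker (momBil L s) ↔ L ((p : MP n) * (p : MP n)) = 0 := by
  rw [LinearMap.mem_ker]
  constructor
  · intro hp
    rw [← momBil_apply', hp]; rfl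
  · intro hp
    ext q
    exact momPSD_zero hL ((mem_restrictTotalDegree _ _ _).1 p.2)
      ((mem_restrictTotalDegree _ _ _).1 q.2) hp

theorem momKer_sq {n : ℕ} {L : Module.Dual ℝ (MP n)} {s : ℕ} {p : MP n} (hp : p ∈ momKer L s) :
    L (p * p) = 0 := by
  nth_rewrite 2 [p.as_sum]
  rw [Finset.mul_sum, map_sum]
  refine Finset.sum_eq_zero fun β hβ => ?_
  have h1 : monomial β (coeff β p) = coeff β p • (monomial β (1 : ℝ)) := by
    rw [smul_monomial]; simp
  rw [h1, mul_smul_comm, map_smul, hp.2 β ((le_totalDegree hβ).trans hp.1), smul_zero]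

/-- If `t ≤ t'`, `L₁` is generic in `K_{t,⪰}` and `L₂` is generic in
`K_{t',⪰}`, then `Ker M_{⌊t/2⌋}(L₁) ⊆ Ker M_{⌊t'/2⌋}(L₂)`, i.e. `N_t ⊆ N_{t'}`. -/
theorem momKer_mono_of_generic {n m t t' : ℕ} (h : Fin m → MP n) (htt' : t ≤ t')
    (L₁ L₂ : Module.Dual ℝ (MP n)) (h₁ : Generic h t L₁) (h₂ : Generic h t' L₂) :
    momKer L₁ (t / 2) ⊆ momKer L₂ (t' / 2) := by
  have hs : t / 2 ≤ t' / 2 := Nat.div_le_div_right htt'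
  obtain ⟨⟨hz1, hp1⟩, hmax⟩ := h₁
  obtain ⟨⟨hz2, hp2⟩, -⟩ := h₂
  have hp2' : momPSD L₂ (t / 2) := fun p hp => hp2 p (hp.trans hs)
  have hp3 : momPSD (L₁ + L₂) (t / 2) := fun p hp => add_nonneg (hp1 p hp) (hp2' p hp)
  have hK : L₁ + L₂ ∈ Kpos h t := by
    refine ⟨fun g hg => ?_, hp3⟩
    have hg' : g ∈ Hset h t' := by
      obtain ⟨α, j, hd, rfl⟩ := hg
      exact ⟨α, j, hd.trans htt', rfl⟩
    rw [LinearMap.add_apply, hz1 g hg, hz2 g hg', add_zero]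
  have hr := hmax _ hK
  have hle : LinearMap.ker (momBil (L₁ + L₂) (t / 2)) ≤ LinearMap.ker (momBil L₁ (t / 2)) := by
    intro p hp
    rw [mem_ker_momBil hp3, LinearMap.add_apply] at hp
    rw [mem_ker_momBil hp1]
    have hd := (mem_restrictTotalDegree _ _ _).1 p.2
    have := hp1 p hd
    have := hp2' p hd
    linarith
  have heq := Submodule.eq_of_le_of_finrank_le hle (by
    have e1 := LinearMap.finrank_range_add_finrank_ker (momBil L₁ (t / 2))
    have e2 := LinearMap.finrank_range_add_finrank_ker (momBil (L₁ + L₂) (t / 2))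
    unfold momRank at hr
    omega)
  intro p hp
  let P : RxT n (t / 2) := ⟨p, (mem_restrictTotalDegree _ _ _).2 hp.1⟩
  have hsq := momKer_sq hp
  have hP : P ∈ LinearMap.ker (momBil L₁ (t / 2)) := (mem_ker_momBil hp1 P).2 hsq
  rw [← heq, mem_ker_momBil hp3, LinearMap.add_apply] at hP
  have hP' : L₁ (p * p) + L₂ (p * p) = 0 := hP
  have h0 : L₂ (p * p) = 0 := by linarith
  exact ⟨hp.1.trans hs, fun β hβ =>
    momPSD_zero hp2 (hp.1.trans hs) (totalDegree_monomial_of_mdeg hβ) h0⟩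
end

section
/- Assume the real variety V_ℝ(I) is finite. Then the real radical satisfies √[ℝ]I = ⋃_t Span_ℝ(G_t), where G_t = H_t ∪ W_t; that is, a polynomial p lies in √[ℝ]I if and only if p is a real linear combination of elements of H_t ∪ W_t for some t. Consequently, a linear functional L on ℝ[x] vanishes on √[ℝ]I if and only if L vanishes on G_t for every t. -/
open MvPolynomial

section aux

lemma sos_eq_zero {R : Type*} [CommRing R] 
    (hR : ∀ a s : R, IsSumSq s → a * a + s = 0 → a = 0) {ι : Type*} [Fintype ι] [DecidableEq ι]
    (v : ι → R) (hv : ∑ k, v k * v k = 0) (k : ι) : v k = 0 := by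
  apply hR (v k) (∑ j ∈ Finset.univ.erase k, v j * v j) (IsSumSq.sum_mul_self _ _)
  rw [← hv, ← Finset.add_sum_erase _ _ (Finset.mem_univ k)]

open scoped MatrixOrder in
lemma psd_factor {d : ℕ} {Q : Matrix (Fin d) (Fin d) ℝ} (hQ : Q.PosSemidef) :
    ∃ B : Matrix (Fin d) (Fin d) ℝ, Q = B.conjTranspose * B :=
  CStarAlgebra.nonneg_iff_eq_star_mul_self.mp hQ.nonneg

lemma compactP (d : ℕ) :
    IsCompact {Q : Matrix (Fin d) (Fin d) ℝ | Q.PosSemidef ∧ Q.trace = 1} := by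
  have h1 : IsCompact {B : Matrix (Fin d) (Fin d) ℝ | (B.transpose * B).trace = 1} := by
    refine IsCompact.of_isClosed_subset (isCompact_univ_pi (X := fun _ => Fin d → ℝ)
      (s := fun _ => Set.univ.pi fun _ => Set.Icc (-1 : ℝ) 1)
      fun i => isCompact_univ_pi fun j => isCompact_Icc) ?_ ?_
    · exact isClosed_eq (by fun_prop) continuous_const
    · intro B hB i _ j _
      have hB' : ∑ x, ∑ y, B y x * B y x = 1 := by
        simpa [Matrix.trace, Matrix.mul_apply] using hB
      have h2 : B i j * B i j ≤ 1 := by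
        rw [← hB']
        calc B i j * B i j ≤ ∑ y, B y j * B y j :=
              Finset.single_le_sum (f := fun y => B y j * B y j)
                (fun y _ => mul_self_nonneg _) (Finset.mem_univ i)
          _ ≤ _ := Finset.single_le_sum (f := fun x => ∑ y, B y x * B y x)
                (fun y _ => Finset.sum_nonneg fun _ _ => mul_self_nonneg _) (Finset.mem_univ j)
      exact abs_le.1 (abs_le_one_iff_mul_self_le_one.2 h2)
  have h2 : {Q : Matrix (Fin d) (Fin d) ℝ | Q.PosSemidef ∧ Q.trace = 1} =
      (fun B : Matrix (Fin d) (Fin d) ℝ => B.transpose * B) ''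
        {B | (B.transpose * B).trace = 1} := by
    ext Q
    constructor
    · rintro ⟨hQ, ht⟩
      obtain ⟨B, rfl⟩ := psd_factor hQ
      refine ⟨B, ?_, ?_⟩ <;> simpa using ht
    · rintro ⟨B, hB, rfl⟩
      refine ⟨?_, hB⟩
      have := Matrix.posSemidef_conjTranspose_mul_self B
      simpa using this
  rw [h2]
  exact h1.image (by fun_prop)

lemma convexP (d : ℕ) :
    Convex ℝ {Q : Matrix (Fin d) (Fin d) ℝ | Q.PosSemidef ∧ Q.trace = 1} := by
  rintro P ⟨hP, hP1⟩ Q ⟨hQ, hQ1⟩ a b ha hb hab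
  refine ⟨(hP.smul ha).add (hQ.smul hb), ?_⟩
  simp [hP1, hQ1, hab]

lemma exists_pos_functional {R : Type*} [CommRing R] [Algebra ℝ R]
    (hR : ∀ a s : R, IsSumSq s → a * a + s = 0 → a = 0) (d : ℕ) (e : Fin d → R)
    (he : LinearIndependent ℝ e) :
    ∃ f : R →ₗ[ℝ] ℝ, ∀ c : Fin d → ℝ, c ≠ 0 → 0 < f ((∑ i, c i • e i) * (∑ i, c i • e i)) := by
  let Φ : Matrix (Fin d) (Fin d) ℝ →ₗ[ℝ] R :=
    { toFun := fun Q => ∑ i, ∑ j, Q i j • (e i * e j)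
      map_add' := fun P Q => by simp [add_smul, Finset.sum_add_distrib]
      map_smul' := fun a Q => by simp [Finset.smul_sum, mul_smul] }
  have hΦ : ∀ Q, Φ Q = ∑ i, ∑ j, Q i j • (e i * e j) := fun _ => rfl
  have hsq : ∀ c : Fin d → ℝ, (∑ i, c i • e i) * (∑ i, c i • e i) =
      ∑ i, ∑ j, (c i * c j) • (e i * e j) := by
    intro c
    rw [Finset.sum_mul_sum]
    simp only [smul_mul_smul_comm]
  let ψ : LinearMap.range Φ ≃ₗ[ℝ] (Fin (Module.finrank ℝ (LinearMap.range Φ)) → ℝ) :=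
    (Module.finBasis ℝ (LinearMap.range Φ)).equivFun
  let Γ := ψ.toLinearMap ∘ₗ Φ.rangeRestrict
  have hΓc : Continuous Γ := LinearMap.continuous_of_finiteDimensional Γ
  set P := {Q : Matrix (Fin d) (Fin d) ℝ | Q.PosSemidef ∧ Q.trace = 1} with hPdef
  have hcomp : IsCompact (Γ '' P) := (compactP d).image hΓc
  have hconv : Convex ℝ (Γ '' P) := (convexP d).linear_image Γ
  have h0 : (0 : Fin (Module.finrank ℝ (LinearMap.range Φ)) → ℝ) ∉ Γ '' P := by
    rintro ⟨Q, ⟨hQ, hQ1⟩, hQ0⟩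
    have h1 : Φ Q = 0 := by
      have : Φ.rangeRestrict Q = 0 := by
        apply ψ.injective
        simpa [Γ] using hQ0
      simpa using congrArg Subtype.val this
    obtain ⟨B, rfl⟩ := psd_factor hQ
    have h2 : ∑ k, (∑ i, B k i • e i) * (∑ i, B k i • e i) = 0 := by
      rw [← h1, hΦ]
      simp_rw [hsq]
      rw [Finset.sum_comm]
      refine Finset.sum_congr rfl fun i _ => ?_
      rw [Finset.sum_comm]
      refine Finset.sum_congr rfl fun j _ => ?_
      simp [Matrix.mul_apply, Finset.sum_smul]
    have h3 : B = 0 := by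
      ext k i
      have := sos_eq_zero hR _ h2 k
      exact Fintype.linearIndependent_iff.1 he _ this i
    simp [h3] at hQ1
  obtain ⟨f, u, hf0, hf⟩ := geometric_hahn_banach_point_closed hconv hcomp.isClosed h0
  rw [map_zero] at hf0
  obtain ⟨g, hg⟩ := LinearMap.exists_extend (f.toLinearMap ∘ₗ ψ.toLinearMap)
  have hg' : ∀ Q, g (Φ Q) = f (Γ Q) := fun Q =>
    LinearMap.congr_fun hg (Φ.rangeRestrict Q)
  refine ⟨g, fun c hc => ?_⟩
  have hcc : 0 < ∑ i, c i * c i := by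
    obtain ⟨i, hi⟩ := Function.ne_iff.1 hc
    exact Finset.sum_pos' (fun _ _ => mul_self_nonneg _) ⟨i, Finset.mem_univ _, mul_self_pos.2 hi⟩
  set r := ∑ i, c i * c i with hr
  let Q : Matrix (Fin d) (Fin d) ℝ := r⁻¹ • Matrix.vecMulVec c c
  have hQ : Q ∈ P := by
    constructor
    · refine Matrix.PosSemidef.smul ?_ (inv_nonneg.2 hcc.le)
      simpa using Matrix.posSemidef_vecMulVec_self_star c
    · simp only [Q, Matrix.trace_smul, Matrix.trace_vecMulVec, dotProduct, smul_eq_mul]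
      exact inv_mul_cancel₀ hcc.ne'
  have h4 : (∑ i, c i • e i) * (∑ i, c i • e i) = r • Φ Q := by
    rw [← map_smul, hΦ, hsq]
    simp [Q, smul_smul, Matrix.vecMulVec_apply, hcc.ne']
  rw [h4, map_smul, hg', smul_eq_mul]
  exact mul_pos hcc (hf0.trans (hf _ ⟨Q, hQ, rfl⟩))

/-! ### real radical -/

lemma mem_realRad_iff {n : ℕ} (I : Ideal (MP n)) (p : MP n) :
    p ∈ realRad I ↔ ∃ m : ℕ, 0 < m ∧ ∃ s, IsSumSq s ∧ p ^ (2 * m) + s ∈ I := by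
  constructor
  · rintro ⟨m, hm, k, q, hq⟩
    exact ⟨m, hm, _, IsSumSq.sum_sq _ _, hq⟩
  · rintro ⟨m, hm, s, hs, hI⟩
    refine ⟨m, hm, ?_⟩
    have : ∃ (k : ℕ) (q : Fin k → MP n), s = ∑ j, q j ^ 2 := by
      clear hI
      induction hs with
      | zero => exact ⟨0, fun _ => 0, by simp⟩
      | sq_add a hs ih =>
        obtain ⟨k, q, rfl⟩ := ih
        exact ⟨k + 1, Fin.cons a q, by simp [Fin.sum_univ_succ, sq]⟩
    obtain ⟨k, q, rfl⟩ := this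
    exact ⟨k, q, hI⟩

lemma isSumSq_even {R : Type*} [CommRing R] (a : R) (k : ℕ) : IsSumSq (a ^ (2 * k)) := by
  rw [two_mul, pow_add]; exact IsSumSq.mul_self _

lemma isSumSq_pow {R : Type*} [CommRing R] {a : R} (ha : IsSumSq a) (k : ℕ) :
    IsSumSq (a ^ k) := by
  induction k with
  | zero => simpa using IsSumSq.one
  | succ k ih => rw [pow_succ]; exact ih.mul ha

/-- modulo `I`, negatives of sums of squares -/
def NegS {n : ℕ} (I : Ideal (MP n)) (x : MP n) : Prop := ∃ s, IsSumSq s ∧ x + s ∈ I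

lemma NegS.add {n : ℕ} {I : Ideal (MP n)} {x y : MP n} (hx : NegS I x) (hy : NegS I y) :
    NegS I (x + y) := by
  obtain ⟨s, hs, h1⟩ := hx
  obtain ⟨t, ht, h2⟩ := hy
  exact ⟨s + t, hs.add ht, by convert I.add_mem h1 h2 using 1; ring⟩

lemma NegS.mul {n : ℕ} {I : Ideal (MP n)} {x y : MP n} (hx : NegS I x) (hy : IsSumSq y) :
    NegS I (y * x) := by
  obtain ⟨s, hs, h1⟩ := hx
  exact ⟨y * s, hy.mul hs, by convert I.mul_mem_left y h1 using 1; ring⟩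

lemma NegS.zero {n : ℕ} {I : Ideal (MP n)} : NegS I 0 := ⟨0, IsSumSq.zero, by simp⟩

lemma NegS.sum {n : ℕ} {I : Ideal (MP n)} {ι : Type*} (S : Finset ι) (f : ι → MP n)
    (hf : ∀ i ∈ S, NegS I (f i)) : NegS I (∑ i ∈ S, f i) := by
  classical
  induction S using Finset.induction_on with
  | empty => simpa using NegS.zero
  | insert a S ha ih =>
    rw [Finset.sum_insert ha]
    exact (hf a (by simp)).add (ih fun i hi => hf i (by simp [hi]))

lemma negS_add_pow {n : ℕ} {I : Ideal (MP n)} {p q : MP n} {a b : ℕ}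
    (hp : NegS I (p ^ (2 * a))) (hq : NegS I (q ^ (2 * b))) :
    NegS I ((p + q) ^ (2 * (a + b)) + (p - q) ^ (2 * (a + b))) := by
  rw [sub_eq_add_neg, add_pow, add_pow, ← Finset.sum_add_distrib]
  refine NegS.sum _ _ fun k hk => ?_
  have hk' : k ≤ 2 * (a + b) := by simpa [Nat.lt_succ_iff] using hk
  rcases Nat.even_or_odd' (2 * (a + b) - k) with ⟨c, hc | hc⟩
  · have hkk : k = 2 * (a + b - c) := by omega
    have h1 : (-q) ^ (2 * c) = q ^ (2 * c) := by simp [pow_mul]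
    rw [hc, h1, ← add_mul]
    rw [mul_comm]
    refine NegS.mul ?_ (IsSumSq.natCast _)
    have h2 : NegS I (p ^ k * q ^ (2 * c)) := by
      by_cases hac : b ≤ c
      · obtain ⟨c', rfl⟩ := Nat.exists_eq_add_of_le hac
        have := hq.mul ((isSumSq_even p (a + b - (b + c'))).mul (isSumSq_even q c'))
        rw [hkk]
        convert this using 1
        ring
      · obtain ⟨c', hc'⟩ : ∃ c', k = 2 * (a + c') := ⟨b - c, by omega⟩
        have := hp.mul ((isSumSq_even p c').mul (isSumSq_even q c))
        rw [hc']
        convert this using 1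
        ring
    exact h2.add h2
  · have h1 : (-q) ^ (2 * c + 1) = - q ^ (2 * c + 1) := by
      rw [Odd.neg_pow ⟨c, rfl⟩]
    rw [hc, h1]
    convert NegS.zero using 1
    ring

lemma mem_realRad_iff' {n : ℕ} (I : Ideal (MP n)) (p : MP n) :
    p ∈ realRad I ↔ ∃ m : ℕ, 0 < m ∧ NegS I (p ^ (2 * m)) := mem_realRad_iff I p

/-- real radical as an ideal -/
def realRadIdeal {n : ℕ} (I : Ideal (MP n)) : Ideal (MP n) where
  carrier := realRad I
  zero_mem' := (mem_realRad_iff' I 0).2 ⟨1, one_pos, by simpa using NegS.zero⟩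
  add_mem' := by
    intro p q hp hq
    obtain ⟨a, ha, hp⟩ := (mem_realRad_iff' I p).1 hp
    obtain ⟨b, hb, hq⟩ := (mem_realRad_iff' I q).1 hq
    obtain ⟨s, hs, h⟩ := negS_add_pow hp hq
    exact (mem_realRad_iff' I _).2 ⟨a + b, by omega, (p - q) ^ (2 * (a + b)) + s,
      (isSumSq_even _ _).add hs, by rwa [← add_assoc]⟩
  smul_mem' := by
    intro r p hp
    obtain ⟨a, ha, hp⟩ := (mem_realRad_iff' I p).1 hp
    refine (mem_realRad_iff' I _).2 ⟨a, ha, ?_⟩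
    rw [smul_eq_mul, mul_pow]
    exact hp.mul (isSumSq_even _ _)

lemma le_realRadIdeal {n : ℕ} (I : Ideal (MP n)) : I ≤ realRadIdeal I := by
  intro p hp
  exact (mem_realRad_iff' I p).2 ⟨1, one_pos, 0, IsSumSq.zero, by
    simpa using I.pow_mem_of_mem hp 2 (by norm_num)⟩

lemma realRadIdeal_real {n : ℕ} (I : Ideal (MP n)) (p s : MP n) (hs : IsSumSq s)
    (h : p * p + s ∈ realRadIdeal I) : p ∈ realRadIdeal I := by
  obtain ⟨m, hm, t, ht, h⟩ := (mem_realRad_iff' I _).1 h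
  have key : ∀ N : ℕ, ∃ u, IsSumSq u ∧ (p * p + s) ^ N = p ^ (2 * N) + u := by
    intro N
    induction N with
    | zero => exact ⟨0, IsSumSq.zero, by simp⟩
    | succ N ih =>
      obtain ⟨u, hu, e⟩ := ih
      refine ⟨u * (p * p) + (p ^ (2 * N) + u) * s,
        (hu.mul (IsSumSq.mul_self p)).add (((isSumSq_even p N).add hu).mul hs), ?_⟩
      rw [pow_succ, e]; ring
  obtain ⟨u, hu, e⟩ := key (2 * m)
  exact (mem_realRad_iff' I p).2 ⟨2 * m, by omega, u + t, hu.add ht, by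
    rwa [← add_assoc, ← e]⟩

lemma quot_real {n : ℕ} (I : Ideal (MP n)) (a s : MP n ⧸ realRadIdeal I) (hs : IsSumSq s)
    (h : a * a + s = 0) : a = 0 := by
  have lift : ∃ s' : MP n, IsSumSq s' ∧ Ideal.Quotient.mk (realRadIdeal I) s' = s := by
    clear h
    induction hs with
    | zero => exact ⟨0, IsSumSq.zero, map_zero _⟩
    | sq_add b hs ih =>
      obtain ⟨t, ht, rfl⟩ := ih
      obtain ⟨b, rfl⟩ := Ideal.Quotient.mk_surjective b
      exact ⟨b * b + t, IsSumSq.sq_add b ht, by simp⟩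
  obtain ⟨s, hs', rfl⟩ := lift
  obtain ⟨a, rfl⟩ := Ideal.Quotient.mk_surjective a
  rw [← map_mul, ← map_add, Ideal.Quotient.eq_zero_iff_mem] at h
  exact Ideal.Quotient.eq_zero_iff_mem.2 (realRadIdeal_real I a s hs' h)

lemma exists_functional {n : ℕ} (I : Ideal (MP n)) (s : ℕ) :
    ∃ L : Module.Dual ℝ (MP n), (∀ p ∈ realRadIdeal I, L p = 0) ∧
      ∀ p : MP n, p.totalDegree ≤ s → p ∉ realRadIdeal I → 0 < L (p * p) := by
  let π : MP n →ₗ[ℝ] (MP n ⧸ realRadIdeal I) := (Ideal.Quotient.mkₐ ℝ (realRadIdeal I)).toLinearMap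
  have hπ : ∀ p, π p = Ideal.Quotient.mk _ p := fun _ => rfl
  let V := Submodule.map π (RxT n s)
  let b := Module.finBasis ℝ V
  obtain ⟨f, hf⟩ := exists_pos_functional (quot_real I) _ (fun i => (b i : MP n ⧸ realRadIdeal I))
    (b.linearIndependent.map' V.subtype (Submodule.ker_subtype V))
  refine ⟨f ∘ₗ π, fun p hp => ?_, fun p hp hpI => ?_⟩
  · have : π p = 0 := Ideal.Quotient.eq_zero_iff_mem.2 hp
    simp [this]
  · let v : V := ⟨π p, p, (mem_restrictTotalDegree _ _ _).2 hp, rfl⟩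
    have h1 : ∑ i, b.repr v i • (b i : MP n ⧸ realRadIdeal I) = π p := by
      have := congrArg V.subtype (b.sum_repr v)
      rw [map_sum] at this
      exact this
    have h2 := hf (fun i => b.repr v i) (by
      intro h0
      apply hpI
      have h3 : π p = 0 := by
        rw [← h1]
        exact Finset.sum_eq_zero fun i _ => by rw [congrFun h0 i]; simp
      exact Ideal.Quotient.eq_zero_iff_mem.1 h3)
    rw [h1] at h2
    simpa [hπ] using h2

/-! ### moment matrices -/

lemma psd_ker {n : ℕ} {L : Module.Dual ℝ (MP n)} {s : ℕ} (hL : momPSD L s) {p : MP n}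
    (hp : p.totalDegree ≤ s) (h0 : L (p * p) = 0) (q : MP n) (hq : q.totalDegree ≤ s) :
    L (p * q) = 0 := by
  have key : ∀ c : ℝ, 0 ≤ 2 * c * L (p * q) + L (q * q) := by
    intro c
    have h := hL (c • p + q) ((totalDegree_add _ _).trans
      (max_le ((totalDegree_smul_le _ _).trans hp) hq))
    have e : (c • p + q) * (c • p + q) = (c * c) • (p * p) + (2 * c) • (p * q) + q * q := by
      simp only [MvPolynomial.smul_eq_C_mul, map_mul, map_ofNat]; ring
    rw [e] at h
    simpa [h0] using h
  by_contra hne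
  have := key (-(L (q * q) + 1) / (2 * L (p * q)))
  field_simp at this
  linarith

lemma mem_momKer_iff {n : ℕ} (L : Module.Dual ℝ (MP n)) (s : ℕ) (p : MP n) :
    p ∈ momKer L s ↔ p.totalDegree ≤ s ∧ ∀ q : MP n, q.totalDegree ≤ s → L (p * q) = 0 := by
  refine and_congr_right fun hp => ⟨fun h q hq => ?_, fun h β hβ => h _ ?_⟩
  · rw [q.as_sum, Finset.mul_sum, map_sum]
    refine Finset.sum_eq_zero fun v hv => ?_
    have : monomial v (coeff v q) = coeff v q • (monomial v 1 : MP n) := by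
      simp [smul_monomial]
    rw [this, mul_smul_comm, map_smul, h v ((le_totalDegree hv).trans hq), smul_zero]
  · rw [totalDegree_monomial _ one_ne_zero]; exact hβ

lemma mem_momKer_iff_ker {n : ℕ} (L : Module.Dual ℝ (MP n)) (s : ℕ) (p : RxT n s) :
    (p : MP n) ∈ momKer L s ↔ p ∈ LinearMap.ker (momBil L s) := by
  rw [mem_momKer_iff, LinearMap.mem_ker]
  have hp := (mem_restrictTotalDegree _ _ _).1 p.2
  constructor
  · rintro ⟨_, h⟩
    ext q
    exact h q ((mem_restrictTotalDegree _ _ _).1 q.2)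
  · intro h
    exact ⟨hp, fun q hq => LinearMap.congr_fun h ⟨q, (mem_restrictTotalDegree _ _ _).2 hq⟩⟩

lemma generic_ker_le {n m : ℕ} {h : Fin m → MP n} {t : ℕ} {Ls L : Module.Dual ℝ (MP n)}
    (hLs : Generic h t Ls) (hL : L ∈ Kpos h t) : momKer Ls (t / 2) ⊆ momKer L (t / 2) := by
  have hsum : Ls + L ∈ Kpos h t := by
    refine ⟨fun g hg => ?_, fun p hp => ?_⟩
    · simp [hLs.1.1 g hg, hL.1 g hg]
    · exact add_nonneg (hLs.1.2 p hp) (hL.2 p hp)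
  have hrank := hLs.2 _ hsum
  have hsub : ∀ p ∈ momKer (Ls + L) (t / 2), p ∈ momKer Ls (t / 2) ∧ p ∈ momKer L (t / 2) := by
    intro p hp
    rw [mem_momKer_iff] at hp
    obtain ⟨hd, hp⟩ := hp
    have h0 := hp p hd
    have h1 := hLs.1.2 p hd
    have h2 := hL.2 p hd
    rw [LinearMap.add_apply] at h0
    rw [mem_momKer_iff, mem_momKer_iff]
    exact ⟨⟨hd, psd_ker hLs.1.2 hd (by linarith)⟩, ⟨hd, psd_ker hL.2 hd (by linarith)⟩⟩
  have hle : LinearMap.ker (momBil (Ls + L) (t / 2)) ≤ LinearMap.ker (momBil Ls (t / 2)) := by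
    intro p hp
    rw [← mem_momKer_iff_ker] at hp ⊢
    exact (hsub p hp).1
  have heq : LinearMap.ker (momBil (Ls + L) (t / 2)) = LinearMap.ker (momBil Ls (t / 2)) := by
    apply Submodule.eq_of_le_of_finrank_le hle
    have e1 := LinearMap.finrank_range_add_finrank_ker (momBil (Ls + L) (t / 2))
    have e2 := LinearMap.finrank_range_add_finrank_ker (momBil Ls (t / 2))
    unfold momRank at hrank
    omega
  intro p hp
  have hd := hp.1
  have := (mem_momKer_iff_ker Ls (t / 2) ⟨p, (mem_restrictTotalDegree _ _ _).2 hd⟩).1 hp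
  rw [← heq, ← mem_momKer_iff_ker] at this
  exact (hsub p this).2

lemma momKer_generic_subset {n m : ℕ} {h : Fin m → MP n} {t : ℕ} {Ls : Module.Dual ℝ (MP n)}
    (hLs : Generic h t Ls) : momKer Ls (t / 2) ⊆ realRad (Ideal.span (Set.range h)) := by
  obtain ⟨L, hL0, hLp⟩ := exists_functional (Ideal.span (Set.range h)) (t / 2)
  have hL : L ∈ Kpos h t := by
    refine ⟨?_, fun p hp => ?_⟩
    · rintro g ⟨α, j, -, rfl⟩
      exact hL0 _ (le_realRadIdeal _ (Ideal.mul_mem_left _ _ (Ideal.subset_span ⟨j, rfl⟩)))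
    · by_cases hpI : p ∈ realRadIdeal (Ideal.span (Set.range h))
      · exact (hL0 _ (Ideal.mul_mem_left _ _ hpI)).ge
      · exact (hLp p hp hpI).le
  intro p hp
  have hp' := (mem_momKer_iff _ _ _).1 (generic_ker_le hLs hL hp)
  by_contra hpI
  exact (hLp p hp'.1 hpI).ne' (hp'.2 p hp'.1)

lemma span_vanish {n m : ℕ} (h : Fin m → MP n) (p : MP n) (hp : p ∈ Ideal.span (Set.range h)) :
    ∃ t0, ∀ t, t0 ≤ t → ∀ L ∈ Kpos h t, L p = 0 := by
  obtain ⟨u, rfl⟩ := (Submodule.mem_span_range_iff_exists_fun _).1 hp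
  refine ⟨∑ j, ((u j).totalDegree + (h j).totalDegree), fun t ht L hL => ?_⟩
  rw [map_sum]
  refine Finset.sum_eq_zero fun j _ => ?_
  have hj : (u j).totalDegree + (h j).totalDegree ≤ t :=
    (Finset.single_le_sum (f := fun j => (u j).totalDegree + (h j).totalDegree)
      (fun _ _ => Nat.zero_le _) (Finset.mem_univ j)).trans ht
  rw [smul_eq_mul, (u j).as_sum, Finset.sum_mul, map_sum]
  refine Finset.sum_eq_zero fun v hv => ?_
  have : monomial v (coeff v (u j)) = coeff v (u j) • (monomial v 1 : MP n) := by
    simp [smul_monomial]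
  rw [this, smul_mul_assoc, map_smul, hL.1 _ ⟨v, j, ?_, rfl⟩, smul_zero]
  exact (Nat.add_le_add_right (le_totalDegree hv) _).trans hj

lemma pow_descend {n : ℕ} {L : Module.Dual ℝ (MP n)} {s : ℕ} (hL : momPSD L s) {p : MP n}
    (k : ℕ) (hk : 2 ^ k * p.totalDegree ≤ s) (h0 : L (p ^ (2 ^ (k + 1))) = 0) :
    L (p * p) = 0 := by
  induction k with
  | zero => simpa [sq] using h0
  | succ k ih =>
    refine ih (le_trans (Nat.mul_le_mul_right _ (Nat.pow_le_pow_right (by norm_num) (by omega))) hk)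
      ?_
    have := psd_ker hL (p := p ^ (2 ^ (k + 1))) ((totalDegree_pow _ _).trans hk)
      (by rw [← pow_add, ← two_mul, ← pow_succ']; exact h0) 1 (by simp)
    simpa using this

lemma sos_nonneg {n : ℕ} {σ : MP n} (hσ : IsSumSq σ) :
    ∃ s0, ∀ s, s0 ≤ s → ∀ L : Module.Dual ℝ (MP n), momPSD L s → 0 ≤ L σ := by
  induction hσ with
  | zero => exact ⟨0, fun s _ L _ => by simp⟩
  | sq_add a hs ih =>
    obtain ⟨s0, ih⟩ := ih
    refine ⟨max s0 a.totalDegree, fun s hs L hL => ?_⟩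
    rw [map_add]
    exact add_nonneg (hL a ((le_max_right _ _).trans hs)) (ih s ((le_max_left _ _).trans hs) L hL)

lemma realRad_mem_momKer {n m : ℕ} (h : Fin m → MP n) (p : MP n)
    (hp : p ∈ realRad (Ideal.span (Set.range h))) :
    ∃ t, ∀ L ∈ Kpos h t, p ∈ momKer L (t / 2) := by
  obtain ⟨k, hk, hN⟩ := (mem_realRad_iff' _ _).1 hp
  have hkk : k ≤ 2 ^ k := Nat.lt_two_pow_self.le
  have hN2 := hN.mul (isSumSq_even p (2 ^ k - k))
  rw [← pow_add] at hN2
  have e : 2 * (2 ^ k - k) + 2 * k = 2 ^ (k + 1) := by rw [pow_succ]; omega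
  rw [e] at hN2
  obtain ⟨σ, hσ, hI⟩ := hN2
  obtain ⟨t0, ht0⟩ := span_vanish h _ hI
  obtain ⟨s0, hs0⟩ := sos_nonneg hσ
  refine ⟨2 * (t0 + s0 + 2 ^ k * p.totalDegree), fun L hL => ?_⟩
  have e2 : 2 * (t0 + s0 + 2 ^ k * p.totalDegree) / 2 = t0 + s0 + 2 ^ k * p.totalDegree := by omega
  have hpsd := hL.2
  have hz := ht0 _ (by omega) L hL
  rw [e2] at hpsd ⊢
  have hd : p.totalDegree ≤ 2 ^ k * p.totalDegree := Nat.le_mul_of_pos_left _ (by positivity)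
  have h1 := hs0 _ (by omega) L hpsd
  have h2 : 0 ≤ L (p ^ (2 ^ (k + 1))) := by
    rw [pow_succ 2 k, pow_mul, sq]
    exact hpsd _ ((totalDegree_pow _ _).trans (by omega))
  rw [map_add] at hz
  have h3 := pow_descend hpsd k (by omega) (by linarith : L (p ^ (2 ^ (k + 1))) = 0)
  rw [mem_momKer_iff]
  exact ⟨by omega, psd_ker hpsd (by omega) h3⟩

end aux


/-- If the real variety `V_ℝ(I)` is finite, then
`√[ℝ]I = ⋃_t Span_ℝ(G_t)` with `G_t = H_t ∪ W_t`; consequently a linear functional vanishes on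
`√[ℝ]I` iff it vanishes on every `G_t`. -/
theorem realRad_eq_iUnion_span {n m : ℕ} (h : Fin m → MP n)
    (hfin : {v : Fin n → ℝ | ∀ j, eval v (h j) = 0}.Finite)
    (Lgen : ℕ → Module.Dual ℝ (MP n)) (hgen : ∀ t, Generic h t (Lgen t)) :
    realRad (Ideal.span (Set.range h)) =
      (⋃ t : ℕ, (Submodule.span ℝ (Hset h t ∪ Wset h t (Lgen t)) : Set (MP n))) ∧
    (∀ L : Module.Dual ℝ (MP n),
      (∀ p ∈ realRad (Ideal.span (Set.range h)), L p = 0) ↔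
      (∀ t : ℕ, ∀ g ∈ Hset h t ∪ Wset h t (Lgen t), L g = 0)) := by
  have hsub : ∀ t, ∀ p ∈ Submodule.span ℝ (Hset h t ∪ Wset h t (Lgen t)),
      p ∈ realRad (Ideal.span (Set.range h)) := by
    intro t p hp
    have : Submodule.span ℝ (Hset h t ∪ Wset h t (Lgen t)) ≤
        (realRadIdeal (Ideal.span (Set.range h))).restrictScalars ℝ := by
      rw [Submodule.span_le]
      rintro g (⟨α, j, -, rfl⟩ | ⟨α, g, -, hg, rfl⟩)
      · exact le_realRadIdeal _ (Ideal.mul_mem_left _ _ (Ideal.subset_span ⟨j, rfl⟩))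
      · exact (realRadIdeal (Ideal.span (Set.range h))).mul_mem_left _
          (momKer_generic_subset (hgen t) hg)
    exact this hp
  have hsup : ∀ p ∈ realRad (Ideal.span (Set.range h)),
      ∃ t, p ∈ Hset h t ∪ Wset h t (Lgen t) := by
    intro p hp
    obtain ⟨t, ht⟩ := realRad_mem_momKer h p hp
    exact ⟨t, Or.inr ⟨0, p, by simp [mdeg], ht _ (hgen t).1, by simp⟩⟩
  refine ⟨?_, fun L => ⟨fun hL t g hg => hL g (hsub t g (Submodule.subset_span hg)),
    fun hL p hp => ?_⟩⟩
  · ext p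
    rw [Set.mem_iUnion]
    constructor
    · intro hp
      obtain ⟨t, ht⟩ := hsup p hp
      exact ⟨t, Submodule.subset_span ht⟩
    · rintro ⟨t, ht⟩
      exact hsub t p ht
  · obtain ⟨t, ht⟩ := hsup p hp
    exact hL t p ht
end

section
/- Let L* be a generic element of K_{t,⪰}, let 1 ≤ s ≤ ⌊t/2⌋, and let G_t = H_t ∪ W_t. If rank M_s(L*) = rank M_{s−1}(L*), then dim π_{2s}(G_t^⊥) = dim π_{s−1}(G_t^⊥); if moreover s ≥ D, where D = max_j deg(h_j), then also dim π_{2s}(G_t^⊥) = dim π_{2s}((G_t^+)^⊥). -/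
open MvPolynomial

section Helpers

lemma mdeg_eq_aux {n : ℕ} (α : Fin n →₀ ℕ) : mdeg α = α.degree := by
  rw [Finsupp.degree_apply]; rfl

lemma mem_RxT {n t : ℕ} {p : MP n} : p ∈ RxT n t ↔ p.totalDegree ≤ t :=
  mem_restrictTotalDegree _ _ _

lemma tdeg_mon {n : ℕ} (α : Fin n →₀ ℕ) : (monomial α (1:ℝ) : MP n).totalDegree = mdeg α := by
  rw [totalDegree_monomial _ one_ne_zero]; rfl

/-- Induction: a submodule containing all monomials of degree at most `t` contains `RxT n t`. -/
lemma RxT_le {n t : ℕ} (S : Submodule ℝ (MP n))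
    (hS : ∀ α : Fin n →₀ ℕ, mdeg α ≤ t → (monomial α 1 : MP n) ∈ S) : RxT n t ≤ S := by
  intro p hp
  rw [mem_RxT] at hp
  rw [p.as_sum]
  refine Submodule.sum_mem _ fun α hα => ?_
  have : (monomial α (coeff α p) : MP n) = coeff α p • monomial α 1 := by
    rw [smul_monomial]; simp
  rw [this]
  exact S.smul_mem _ (hS α ((le_totalDegree hα).trans hp))

lemma mul_mem_RxT {n a b c : ℕ} {p q : MP n} (hp : p ∈ RxT n a) (hq : q ∈ RxT n b)
    (h : a + b ≤ c) : p * q ∈ RxT n c := by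
  rw [mem_RxT] at *
  exact (totalDegree_mul _ _).trans (by omega)

lemma RxT_mono {n a b : ℕ} (h : a ≤ b) : RxT n a ≤ RxT n b := by
  intro p hp
  rw [mem_RxT] at *; omega

lemma X_mem_RxT {n : ℕ} (i : Fin n) : (X i : MP n) ∈ RxT n 1 := by
  rw [mem_RxT, totalDegree_X]

lemma momKer_iff {n : ℕ} {L : Module.Dual ℝ (MP n)} {s : ℕ} {p : MP n} :
    p ∈ momKer L s ↔ p ∈ RxT n s ∧ ∀ q ∈ RxT n s, L (p * q) = 0 := by
  rw [mem_RxT]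
  refine and_congr Iff.rfl ⟨fun h => ?_, fun h β hβ => h _ (by rw [mem_RxT, tdeg_mon]; exact hβ)⟩
  have := RxT_le (t := s) (LinearMap.ker (L ∘ₗ LinearMap.mulLeft ℝ p)) (by
    intro α hα
    simpa using h α hα)
  intro q hq
  simpa using this hq

/-- degree splitting -/
lemma exists_split {n : ℕ} (α : Fin n →₀ ℕ) (d : ℕ) (hd : d ≤ mdeg α) :
    ∃ β γ : Fin n →₀ ℕ, α = β + γ ∧ mdeg β = d ∧ mdeg γ = mdeg α - d := by
  induction d with
  | zero => exact ⟨0, α, by simp, by simp [mdeg], by simp⟩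
  | succ d ih =>
    obtain ⟨β, γ, h1, h2, h3⟩ := ih (by omega)
    have hγ : γ ≠ 0 := by
      rintro rfl
      simp [mdeg] at h3 
      simp only [mdeg] at hd
      omega
    obtain ⟨i, hi⟩ := Finsupp.ne_iff.1 hγ
    have hle : Finsupp.single i 1 ≤ γ := by
      rw [Finsupp.single_le_iff]
      simp at hi; omega
    have e : γ = Finsupp.single i 1 + (γ - Finsupp.single i 1) := (add_tsub_cancel_of_le hle).symm
    refine ⟨β + Finsupp.single i 1, γ - Finsupp.single i 1, ?_, ?_, ?_⟩
    · rw [add_assoc, ← e, h1]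
    · rw [mdeg_eq_aux] at *; simp [h2]
    · have := congrArg mdeg e
      rw [mdeg_eq_aux, mdeg_eq_aux, map_add, Finsupp.degree_single, ← mdeg_eq_aux, ← mdeg_eq_aux] at this
      omega

/-- Flatness from the rank condition. -/
lemma flat_of_rank {n s : ℕ} (L : Module.Dual ℝ (MP n))
    (hrank : momRank L s = momRank L (s - 1)) (p : MP n) (hp : p ∈ RxT n s) :
    ∃ q ∈ RxT n (s - 1), p - q ∈ momKer L s := by
  have hle : RxT n (s - 1) ≤ RxT n s := RxT_mono (by omega)
  haveI : Module.Finite ℝ (RxT n s) := inferInstance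
  set inc := Submodule.inclusion hle
  have e : momBil L (s - 1) = inc.dualMap ∘ₗ (momBil L s ∘ₗ inc) := by
    ext p q; rfl
  have h1 : LinearMap.range (momBil L s ∘ₗ inc) ≤ LinearMap.range (momBil L s) :=
    LinearMap.range_comp_le_range _ _
  have h2 : Module.finrank ℝ (LinearMap.range (momBil L s)) ≤
      Module.finrank ℝ (LinearMap.range (momBil L s ∘ₗ inc)) := by
    change momRank L s ≤ _
    rw [hrank, momRank, e, LinearMap.range_comp]
    exact Submodule.finrank_map_le _ _
  have h3 := Submodule.eq_of_le_of_finrank_le h1 h2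
  have h4 : momBil L s ⟨p, hp⟩ ∈ LinearMap.range (momBil L s ∘ₗ inc) := by
    rw [h3]; exact ⟨_, rfl⟩
  obtain ⟨q, hq⟩ := h4
  refine ⟨q, q.2, momKer_iff.2 ⟨sub_mem hp (hle q.2), fun r hr => ?_⟩⟩
  have := congrArg (fun f => f ⟨r, hr⟩) hq
  have h5 : L ((q : MP n) * r) = L (p * r) := this
  rw [sub_mul, map_sub, h5, sub_self]

/-- Abstract construction of an ideal from a multiplicatively consistent linear map. -/
lemma ideal_of_flat {n s : ℕ} (hs : 1 ≤ s) {V : Type*} [AddCommGroup V] [Module ℝ V]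
    (e : RxT n s →ₗ[ℝ] V)
    (inc : RxT n (s - 1) →ₗ[ℝ] RxT n s) (hinc : ∀ q, (inc q : MP n) = q)
    (mX : Fin n → RxT n (s - 1) →ₗ[ℝ] RxT n s) (hmX : ∀ i q, (mX i q : MP n) = X i * (q : MP n))
    (hsurj : Function.Surjective (e ∘ₗ inc))
    (hX : ∀ i q, e (inc q) = 0 → e (mX i q) = 0)
    (hc : ∀ i j q r r', e (mX j q) = e (inc r) → e (mX i q) = e (inc r') →
      e (mX i r) = e (mX j r')) :
    ∃ J : Ideal (MP n), (∀ p : RxT n s, (p : MP n) ∈ J ↔ e p = 0) ∧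
      ∀ p : MP n, ∃ q ∈ RxT n (s - 1), p - q ∈ J := by
  obtain ⟨τ, hτ⟩ := LinearMap.exists_rightInverse_of_surjective (e ∘ₗ inc)
    (LinearMap.range_eq_top.2 hsurj)
  have hτ' : ∀ v, e (inc (τ v)) = v := fun v => congrArg (fun f => f v) hτ
  let T : Fin n → Module.End ℝ V := fun i => e ∘ₗ mX i ∘ₗ τ
  have hT : ∀ i q, T i (e (inc q)) = e (mX i q) := by
    intro i q
    have := hX i (τ (e (inc q)) - q) (by rw [map_sub, map_sub, hτ', sub_self])
    rw [map_sub, map_sub, sub_eq_zero] at this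
    exact this
  have hcomm : ∀ a ∈ Set.range T, ∀ b ∈ Set.range T, a * b = b * a := by
    rintro _ ⟨i, rfl⟩ _ ⟨j, rfl⟩
    ext v
    obtain ⟨q, rfl⟩ := hsurj v
    change T i (T j (e (inc q))) = T j (T i (e (inc q)))
    rw [hT, hT]
    obtain ⟨r, hr⟩ := hsurj (e (mX j q))
    obtain ⟨r', hr'⟩ := hsurj (e (mX i q))
    change e (inc r) = _ at hr
    change e (inc r') = _ at hr'
    rw [← hr, ← hr', hT, hT]
    exact hc i j q r r' hr.symm hr'.symm
  letI : CommRing (Algebra.adjoin ℝ (Set.range T)) := Algebra.adjoinCommRingOfComm ℝ hcomm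
  let φ0 : MP n →ₐ[ℝ] Algebra.adjoin ℝ (Set.range T) :=
    aeval fun i => ⟨T i, Algebra.subset_adjoin ⟨i, rfl⟩⟩
  let φ : MP n →ₐ[ℝ] Module.End ℝ V := (Algebra.adjoin ℝ (Set.range T)).val.comp φ0
  have hφX : ∀ i, φ (X i) = T i := by
    intro i
    simp [φ, φ0]
  have h1 : (1 : MP n) ∈ RxT n s := by rw [mem_RxT]; simp
  let v0 : V := e ⟨1, h1⟩
  -- evaluation
  have hev : ∀ d, d ≤ s → ∀ α : Fin n →₀ ℕ, mdeg α = d → ∀ hα : (monomial α 1 : MP n) ∈ RxT n s,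
      φ (monomial α 1) v0 = e ⟨monomial α 1, hα⟩ := by
    intro d
    induction d with
    | zero =>
      intro _ α h0 hα
      have : α = 0 := by
        rw [mdeg_eq_aux] at h0; exact (Finsupp.degree_eq_zero_iff _).1 h0
      subst this
      have e1 : (monomial 0 1 : MP n) = 1 := rfl
      simp only [e1, map_one]
      rfl
    | succ d ih =>
      intro hd α hα hm
      obtain ⟨β, γ, rfl, hβ, hγ⟩ := exists_split α 1 (by omega)
      have : ∃ i, β = Finsupp.single i 1 := by
        have hβ0 : β ≠ 0 := by
          rintro rfl
          simp [mdeg] at hβ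
        obtain ⟨i, hi⟩ := Finsupp.ne_iff.1 hβ0
        have hle : Finsupp.single i 1 ≤ β := by
          rw [Finsupp.single_le_iff]
          simp at hi; omega
        have e2 : β = Finsupp.single i 1 + (β - Finsupp.single i 1) :=
          (add_tsub_cancel_of_le hle).symm
        have e3 := congrArg mdeg e2
        rw [mdeg_eq_aux, mdeg_eq_aux, map_add, ← mdeg_eq_aux β, hβ, Finsupp.degree_single] at e3
        have e4 : β - Finsupp.single i 1 = 0 := (Finsupp.degree_eq_zero_iff _).1 (by omega)
        rw [e4, add_zero] at e2
        exact ⟨i, e2⟩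
      obtain ⟨i, rfl⟩ := this
      have hmul : (monomial (Finsupp.single i 1 + γ) 1 : MP n) = X i * monomial γ 1 := by
        simp [X, monomial_mul]
      have hγ' : mdeg γ = d := by omega
      have hγm : (monomial γ 1 : MP n) ∈ RxT n (s - 1) := by rw [mem_RxT, tdeg_mon]; omega
      have hγs : (monomial γ 1 : MP n) ∈ RxT n s := RxT_mono (by omega) hγm
      have ee : (⟨monomial (Finsupp.single i 1 + γ) 1, hm⟩ : RxT n s) = mX i ⟨_, hγm⟩ := by
        apply Subtype.ext; rw [hmX]; exact hmul
      have ee2 : (⟨monomial γ 1, hγs⟩ : RxT n s) = inc ⟨_, hγm⟩ := by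
        apply Subtype.ext; rw [hinc]
      rw [ee, hmul, map_mul, Module.End.mul_apply, ih (by omega) γ hγ' hγs, hφX, ee2, hT]
  let ev : MP n →ₗ[ℝ] V := (LinearMap.applyₗ v0) ∘ₗ φ.toLinearMap
  have hevφ : ∀ p, ev p = φ p v0 := fun p => rfl
  obtain ⟨e', he'⟩ := LinearMap.exists_extend e
  have he'' : ∀ p : RxT n s, e' p = e p := fun p => congrArg (fun f => f p) he'
  have hevs : ∀ p : RxT n s, ev p = e p := by
    have := RxT_le (t := s) (LinearMap.ker (ev - e')) (by
      intro α hα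
      have hm : (monomial α 1 : MP n) ∈ RxT n s := by rw [mem_RxT, tdeg_mon]; exact hα
      rw [LinearMap.mem_ker, LinearMap.sub_apply, hevφ, hev _ hα α rfl hm, sub_eq_zero]
      exact (he'' ⟨_, hm⟩).symm)
    intro p
    have h := this p.2
    rw [LinearMap.mem_ker, LinearMap.sub_apply, sub_eq_zero, he''] at h
    exact h
  let J : Ideal (MP n) :=
    { carrier := {p | ev p = 0}
      add_mem' := by
        intro a b ha hb
        simp only [Set.mem_setOf_eq] at *
        rw [map_add, ha, hb, add_zero]
      zero_mem' := map_zero ev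
      smul_mem' := by
        intro c p hp
        simp only [Set.mem_setOf_eq] at *
        rw [hevφ] at *
        rw [smul_eq_mul, map_mul, Module.End.mul_apply, hp, map_zero] }
  have hJ : ∀ p, p ∈ J ↔ ev p = 0 := fun p => Iff.rfl
  refine ⟨J, fun p => by rw [hJ, hevs], fun p => ?_⟩
  obtain ⟨q, hq⟩ := hsurj (ev p)
  refine ⟨q, q.2, ?_⟩
  rw [hJ, map_sub, ← hq, ← hinc, hevs, sub_eq_zero]
  rfl

lemma ideal_exists {n s : ℕ} (hs : 1 ≤ s) (L : Module.Dual ℝ (MP n))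
    (hflat : ∀ p ∈ RxT n s, ∃ q ∈ RxT n (s - 1), p - q ∈ momKer L s) :
    ∃ J : Ideal (MP n), (∀ p ∈ RxT n s, p ∈ J ↔ p ∈ momKer L s) ∧
      ∀ p : MP n, ∃ q ∈ RxT n (s - 1), p - q ∈ J := by
  have hle : RxT n (s - 1) ≤ RxT n s := RxT_mono (by omega)
  let mX : Fin n → RxT n (s - 1) →ₗ[ℝ] RxT n s := fun i =>
    (LinearMap.mulLeft ℝ (X i : MP n)).restrict
      (fun q hq => mul_mem_RxT (X_mem_RxT i) hq (by omega))
  have hker : ∀ p : RxT n s, momBil L s p = 0 ↔ (p : MP n) ∈ momKer L s := by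
    intro p
    rw [momKer_iff]
    constructor
    · intro h
      exact ⟨p.2, fun q hq => congrArg (fun f => f ⟨q, hq⟩) h⟩
    · intro h
      ext q
      exact h.2 q q.2
  -- testing against degree ≤ s - 1 suffices
  have htest : ∀ p ∈ RxT n s, (∀ r ∈ RxT n (s - 1), L (p * r) = 0) → p ∈ momKer L s := by
    intro p hp h
    refine momKer_iff.2 ⟨hp, fun q hq => ?_⟩
    obtain ⟨r, hr, hk⟩ := hflat q hq
    have h1 := (momKer_iff.1 hk).2 p hp
    have h2 := h r hr
    have : p * q = (q - r) * p + p * r := by ring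
    rw [this, map_add, h1, h2, add_zero]
  let e := (LinearMap.ker (momBil L s)).mkQ
  have he : ∀ p, e p = 0 ↔ (p : MP n) ∈ momKer L s := by
    intro p
    rw [← hker]
    simp [e]
  have he2 : ∀ p q, e p = e q ↔ (p : MP n) - q ∈ momKer L s := by
    intro p q
    rw [← sub_eq_zero, ← map_sub, he]; rfl
  obtain ⟨J, hJ1, hJ2⟩ := ideal_of_flat hs e (Submodule.inclusion hle) (fun q => rfl) mX
    (fun i q => rfl)
    (by
      intro v
      obtain ⟨p, rfl⟩ := Submodule.mkQ_surjective _ v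
      obtain ⟨q, hq, hk⟩ := hflat p p.2
      refine ⟨⟨q, hq⟩, ?_⟩
      symm
      exact (he2 _ _).2 hk)
    (by
      intro i q hq
      rw [he] at *
      refine htest _ (mX i q).2 fun r hr => ?_
      have := (momKer_iff.1 hq).2 (X i * r) (mul_mem_RxT (X_mem_RxT i) hr (by omega))
      have h2 : (mX i q : MP n) * r = (q : MP n) * (X i * r) := by
        change X i * (q : MP n) * r = _
        ring
      rw [h2]; exact this)
    (by
      intro i j q r r' h1 h2
      rw [he2] at *
      refine htest _ (sub_mem (mX i r).2 (mX j r').2) fun p hp => ?_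
      have h3 := (momKer_iff.1 h1).2 (X i * p) (mul_mem_RxT (X_mem_RxT i) hp (by omega))
      have h4 := (momKer_iff.1 h2).2 (X j * p) (mul_mem_RxT (X_mem_RxT j) hp (by omega))
      have h5 : ((mX i r : MP n) - (mX j r' : MP n)) * p =
        ((mX i q : MP n) - (r' : MP n)) * (X j * p) -
          ((mX j q : MP n) - (r : MP n)) * (X i * p) := by
        change (X i * (r : MP n) - X j * (r' : MP n)) * p =
          (X i * (q : MP n) - (r' : MP n)) * (X j * p) - (X j * (q : MP n) - (r : MP n)) * (X i * p)
        ring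
      rw [h5, map_sub]
      erw [h3, h4]
      rw [sub_zero])
  exact ⟨J, fun p hp => (hJ1 ⟨p, hp⟩).trans (he _), hJ2⟩

lemma momKer_mono {n s k : ℕ} (hsk : s ≤ k) {L : Module.Dual ℝ (MP n)} (hL : momPSD L k)
    {g : MP n} (hg : g ∈ momKer L s) : g ∈ momKer L k := by
  rw [momKer_iff] at *
  refine ⟨RxT_mono hsk hg.1, fun q hq => ?_⟩
  have h0 : L (g * g) = 0 := hg.2 g hg.1
  have key : ∀ c : ℝ, 0 ≤ L (q * q) + 2 * c * L (g * q) := by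
    intro c
    have := hL (q + c • g) (mem_RxT.1 (add_mem hq (Submodule.smul_mem _ _ (RxT_mono hsk hg.1))))
    have e : (q + c • g) * (q + c • g) = q * q + (2 * c) • (g * q) + (c * c) • (g * g) := by
      simp only [smul_eq_C_mul, map_mul]
      have : (C 2 : MP n) = 2 := rfl
      rw [this]
      ring
    rw [e, map_add, map_add, map_smul, map_smul, h0] at this
    simpa using this
  by_contra hne
  have := key (-(L (q * q) + 1) / (2 * L (g * q)))
  have e : 2 * (-(L (q * q) + 1) / (2 * L (g * q))) * L (g * q) = -(L (q * q) + 1) := by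
    field_simp
  rw [e] at this
  linarith

/-- Span of the products `x^α g`, `|α| ≤ k`, `g ∈ Ker M_s(L)`. -/
noncomputable def Uspan {n : ℕ} (L : Module.Dual ℝ (MP n)) (s k : ℕ) : Submodule ℝ (MP n) :=
  Submodule.span ℝ {p | ∃ (α : Fin n →₀ ℕ) (g : MP n), mdeg α ≤ k ∧ g ∈ momKer L s ∧
    p = monomial α 1 * g}

lemma red_U {n s k : ℕ} (hs : 1 ≤ s) (L : Module.Dual ℝ (MP n))
    (hflat : ∀ p ∈ RxT n s, ∃ q ∈ RxT n (s - 1), p - q ∈ momKer L s) :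
    RxT n (s + k) ≤ RxT n (s - 1) ⊔ Uspan L s k := by
  have : ∀ d, d ≤ s + k → RxT n d ≤ RxT n (s - 1) ⊔ Uspan L s k := by
    intro d
    induction d with
    | zero => intro _; exact (RxT_mono (by omega)).trans le_sup_left
    | succ d ih =>
      intro hd
      refine RxT_le _ fun α hα => ?_
      by_cases h : mdeg α ≤ s - 1
      · exact Submodule.mem_sup_left (by rw [mem_RxT, tdeg_mon]; exact h)
      obtain ⟨β, γ, rfl, hβ, hγ⟩ := exists_split α s (by omega)
      obtain ⟨q, hq, hk⟩ := hflat (monomial β 1) (by rw [mem_RxT, tdeg_mon]; omega)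
      have e : (monomial (β + γ) 1 : MP n) =
          monomial γ 1 * q + monomial γ 1 * (monomial β 1 - q) := by
        rw [← mul_add, add_sub_cancel, monomial_mul, add_comm, one_mul]
      rw [e]
      refine add_mem (ih (by omega) ?_) (Submodule.mem_sup_right ?_)
      · exact mul_mem_RxT (a := mdeg γ) (by rw [mem_RxT, tdeg_mon]) hq (by omega)
      · exact Submodule.subset_span ⟨γ, _, by omega, hk, rfl⟩
  exact this _ le_rfl

end Helpers

/-- Let `L*` be generic in `K_{t,⪰}`, `1 ≤ s ≤ ⌊t/2⌋`, `G_t = H_t ∪ W_t`.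
If `rank M_s(L*) = rank M_{s−1}(L*)`, then `dim π_{2s}(G_t^⊥) = dim π_{s−1}(G_t^⊥)`; if
moreover `s ≥ D = max_j deg h_j`, then also `dim π_{2s}(G_t^⊥) = dim π_{2s}((G_t⁺)^⊥)`. -/
theorem dimProj_eq_of_momRank_eq {n m s t : ℕ} (h : Fin m → MP n)
    (hs1 : 1 ≤ s) (hst : s ≤ t / 2)
    (Lstar : Module.Dual ℝ (MP n)) (hgen : Generic h t Lstar)
    (hrank : momRank Lstar s = momRank Lstar (s - 1)) :
    dimProj (2 * s) (Hset h t ∪ Wset h t Lstar) =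
      dimProj (s - 1) (Hset h t ∪ Wset h t Lstar) ∧
    ((∀ j, (h j).totalDegree ≤ s) →
      dimProj (2 * s) (Hset h t ∪ Wset h t Lstar) =
        dimProj (2 * s) (plusOp (Hset h t ∪ Wset h t Lstar))) := by
  set k := t / 2 with hkdef
  set G := Hset h t ∪ Wset h t Lstar with hG
  have hPSD : momPSD Lstar k := hgen.1.2
  have hH := hgen.1.1
  have hflat := flat_of_rank Lstar hrank
  obtain ⟨J, hJ1, hJ2⟩ := ideal_exists hs1 Lstar hflat
  have hred := red_U (k := k) hs1 Lstar hflat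
  have hKJ : ∀ g ∈ momKer Lstar s, g ∈ J := fun g hg => (hJ1 g (momKer_iff.1 hg).1).2 hg
  have hUJ : Uspan Lstar s k ≤ J.restrictScalars ℝ := by
    refine Submodule.span_le.2 ?_
    rintro _ ⟨α, g, _, hg, rfl⟩
    exact J.mul_mem_left _ (hKJ g hg)
  have hle : RxT n (s - 1) ≤ RxT n s := RxT_mono (by omega)
  have hJU : ∀ p ∈ RxT n (s + k), p ∈ J → p ∈ Uspan Lstar s k := by
    intro p hp hpJ
    obtain ⟨q, hq, u, hu, rfl⟩ := Submodule.mem_sup.1 (hred hp)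
    refine add_mem ?_ hu
    have hqJ : q ∈ J := by
      have := J.sub_mem hpJ (hUJ hu)
      simpa using this
    exact Submodule.subset_span ⟨0, q, by simp [mdeg], (hJ1 q (hle hq)).1 hqJ, by simp⟩
  have hUG : Uspan Lstar s k ≤ Submodule.span ℝ G := by
    refine Submodule.span_mono ?_
    rintro _ ⟨α, g, hα, hg, rfl⟩
    exact Or.inr ⟨α, g, hα, momKer_mono hst hPSD hg, rfl⟩
  have hann : ∀ (S : Set (MP n)) (f : Module.Dual ℝ (MP n)),
      f ∈ annih S ↔ ∀ p ∈ Submodule.span ℝ S, f p = 0 := fun S f =>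
    Submodule.mem_dualAnnihilator _
  have hproj : ∀ (d : ℕ) (f f' : Module.Dual ℝ (MP n)),
      projDual n d f = projDual n d f' ↔ ∀ p ∈ RxT n d, f p = f' p := by
    intro d f f'
    constructor
    · intro hh p hp
      exact congrArg (fun g => g ⟨p, hp⟩) hh
    · intro hh
      ext p
      exact hh p p.2
  have hLU : ∀ p ∈ Uspan Lstar s k, Lstar p = 0 := by
    have : Uspan Lstar s k ≤ LinearMap.ker Lstar := by
      refine Submodule.span_le.2 ?_
      rintro _ ⟨α, g, hα, hg, rfl⟩
      have := (momKer_mono hst hPSD hg).2 α hα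
      rw [mul_comm] at this
      exact this
    exact fun p hp => this hp
  constructor
  · have hle2 : RxT n (s - 1) ≤ RxT n (2 * s) := RxT_mono (by omega)
    let res := (Submodule.inclusion hle2).dualMap
    have hcomp : projDual n (s - 1) = res ∘ₗ projDual n (2 * s) := by
      ext f p; rfl
    unfold dimProj
    rw [hcomp, Submodule.map_comp]
    symm
    rw [← LinearMap.range_domRestrict]
    refine LinearMap.finrank_range_of_inj ?_
    rw [injective_iff_map_eq_zero]
    rintro ⟨_, f, hf, rfl⟩ h0
    apply Subtype.ext
    change projDual n (2 * s) f = 0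
    have h1 : projDual n (s - 1) f = projDual n (s - 1) 0 := by
      rw [map_zero, hcomp]; exact h0
    rw [hproj] at h1
    rw [← map_zero (projDual n (2 * s)), hproj]
    intro p hp
    obtain ⟨q, hq, u, hu, rfl⟩ := Submodule.mem_sup.1 (hred (RxT_mono (by omega) hp))
    rw [map_add, h1 q hq, (hann _ _).1 hf u (hUG hu)]
    simp
  · intro hD
    have hGJ : ∀ g ∈ G, g ∈ J := by
      rintro _ (⟨α, j, hα, rfl⟩ | ⟨α, g, hα, hg, rfl⟩)
      · refine J.mul_mem_left _ (hKJ _ ⟨hD j, fun β hβ => ?_⟩)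
        rw [mul_comm]
        have := hD j
        exact hH _ ⟨β, j, by omega, rfl⟩
      · refine J.mul_mem_left _ ?_
        obtain ⟨q, hq, hgq⟩ := hJ2 g
        have hg' := momKer_iff.1 hg
        have hqK : q ∈ momKer Lstar s := by
          refine momKer_iff.2 ⟨hle hq, fun p hp => ?_⟩
          have h1 : Lstar ((g - q) * p) = 0 :=
            hLU _ (hJU _ (mul_mem_RxT (sub_mem hg'.1 (RxT_mono (by omega) hq)) hp (by omega))
              (J.mul_mem_right _ hgq))
          have h2 := hg'.2 p (RxT_mono hst hp)
          rw [sub_mul, map_sub, h2, zero_sub, neg_eq_zero] at h1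
          exact h1
        have := J.add_mem hgq (hKJ q hqK)
        simpa using this
    have hplus : Submodule.span ℝ (plusOp G) ≤ J.restrictScalars ℝ := by
      refine Submodule.span_le.2 ?_
      rintro p (hp | hp)
      · exact hGJ p hp
      · obtain ⟨i, g, hg, rfl⟩ := Set.mem_iUnion.1 hp
        exact J.mul_mem_left _ (hGJ g hg)
    unfold dimProj
    suffices hmm : Submodule.map (projDual n (2 * s)) (annih G) =
        Submodule.map (projDual n (2 * s)) (annih (plusOp G)) by rw [hmm]
    apply le_antisymm
    · rintro _ ⟨f, hf, rfl⟩
      have hf' := (hann _ _).1 hf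
      have h1 : f ∈ (J.restrictScalars ℝ ⊓ RxT n (2 * s)).dualAnnihilator := by
        rw [Submodule.mem_dualAnnihilator]
        rintro p ⟨hpJ, hp⟩
        exact hf' p (hUG (hJU p (RxT_mono (by omega) hp) hpJ))
      rw [Subspace.dualAnnihilator_inf_eq] at h1
      obtain ⟨a, ha, b, hb, rfl⟩ := Submodule.mem_sup.1 h1
      refine ⟨a, (hann _ _).2 fun p hp => ?_, ?_⟩
      · exact (Submodule.mem_dualAnnihilator _).1 ha p (hplus hp)
      · rw [hproj]
        intro p hp
        rw [LinearMap.add_apply, (Submodule.mem_dualAnnihilator _).1 hb p hp, add_zero]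
    · refine Submodule.map_mono ?_
      exact Submodule.dualAnnihilator_anti (Submodule.span_mono Set.subset_union_left)
end

section
/- Let L* be a generic element of K_{t,⪰}, let 1 ≤ s ≤ ⌊t/2⌋, and let G_t = H_t ∪ W_t. Assume dim π_{2s}(G_t^⊥) = dim π_{s−1}(G_t^⊥) and dim π_{2s}(G_t^⊥) = dim π_{2s}((G_t^+)^⊥). Then rank M_s(L*) = rank M_{s−1}(L*), and for any set B of monomials of degree at most s−1, B satisfies the direct sum decomposition ℝ[x]_{s−1} = Span_ℝ(B) ⊕ (Span_ℝ(G_t) ∩ ℝ[x]_{s−1}) if and only if the columns of M_{s−1}(L*) indexed by B form a maximal linearly independent set of columns of M_{s−1}(L*). -/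
open MvPolynomial

theorem aux_gen1 {V W : Type*} [AddCommGroup V] [Module ℝ V] [FiniteDimensional ℝ V]
    [AddCommGroup W] [Module ℝ W] (f : V →ₗ[ℝ] W) (P : Submodule ℝ V)
    (hd : Module.finrank ℝ P = Module.finrank ℝ (Submodule.map f P)) (x : V) (hx : x ∈ P)
    (hfx : f x = 0) : x = 0 := by
  have hrk := LinearMap.finrank_range_add_finrank_ker (f.domRestrict P)
  rw [LinearMap.range_domRestrict] at hrk
  have hk0 : LinearMap.ker (f.domRestrict P) = ⊥ := by
    apply Submodule.finrank_eq_zero.1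
    omega
  have hz : (⟨x, hx⟩ : P) ∈ LinearMap.ker (f.domRestrict P) := hfx
  rw [hk0, Submodule.mem_bot] at hz
  exact congrArg Subtype.val hz

theorem aux_gen2 {V W : Type*} [AddCommGroup V] [Module ℝ V]
    [AddCommGroup W] [Module ℝ W] (f : V →ₗ[ℝ] W) (P : Submodule ℝ V)
    (hf : ∀ x ∈ P, f x = 0 → x = 0) :
    Module.finrank ℝ P = Module.finrank ℝ (Submodule.map f P) := by
  rw [← LinearMap.range_domRestrict]
  symm
  apply LinearMap.finrank_range_of_inj
  rw [← LinearMap.ker_eq_bot, LinearMap.ker_eq_bot']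
  rintro ⟨x, hx⟩ hz
  exact Subtype.ext (hf x hx hz)

theorem aux_RxT_span (n k : ℕ) :
    RxT n k = Submodule.span ℝ ((fun a => (monomial a 1 : MP n)) '' {β | mdeg β ≤ k}) :=
  restrictSupport_eq_span ℝ _

theorem aux_mem_RxT {n k : ℕ} {p : MP n} : p ∈ RxT n k ↔ p.totalDegree ≤ k :=
  mem_restrictTotalDegree _ _ _

theorem aux_mono_mem {n k : ℕ} {a : Fin n →₀ ℕ} (ha : mdeg a ≤ k) :
    (monomial a 1 : MP n) ∈ RxT n k := by
  rw [aux_RxT_span]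
  exact Submodule.subset_span ⟨a, ha, rfl⟩

theorem aux_RxT_mono {n k l : ℕ} (hkl : k ≤ l) : RxT n k ≤ RxT n l := by
  intro p hp
  rw [aux_mem_RxT] at *
  omega

theorem aux_psd {n d : ℕ} (L : Module.Dual ℝ (MP n)) (hL : momPSD L d) (p r : MP n)
    (hp : p ∈ RxT n d) (hr : r ∈ RxT n d) (h0 : L (p * p) = 0) : L (p * r) = 0 := by
  by_contra ha
  have key : ∀ c : ℝ, 0 ≤ 2 * c * L (p * r) + L (r * r) := by
    intro c
    have h1 := hL (c • p + r) (aux_mem_RxT.1 (add_mem (Submodule.smul_mem _ c hp) hr))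
    have h2 : (c • p + r) * (c • p + r) =
        (c * c) • (p * p) + (2 * c) • (p * r) + r * r := by
      simp only [MvPolynomial.smul_eq_C_mul, map_mul, map_ofNat]
      ring
    rw [h2] at h1
    simpa [h0] using h1
  have := key (-(L (r * r) + 1) / (2 * L (p * r)))
  have h3 : 2 * (-(L (r * r) + 1) / (2 * L (p * r))) * L (p * r) = -(L (r * r) + 1) := by
    field_simp
  linarith

/-- First dimension condition: surjectivity. -/
theorem aux_dim1 {n k l : ℕ} (hkl : k ≤ l) (G : Set (MP n))
    (hd : dimProj l G = dimProj k G) :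
    RxT n l ≤ RxT n k ⊔ Submodule.span ℝ G := by
  set res : Module.Dual ℝ (RxT n l) →ₗ[ℝ] Module.Dual ℝ (RxT n k) :=
    (Submodule.inclusion (aux_RxT_mono hkl)).dualMap with hres
  have hcomp : res ∘ₗ projDual n l = projDual n k := by
    ext f x
    rfl
  have hmap : Submodule.map res (Submodule.map (projDual n l) (annih G)) =
      Submodule.map (projDual n k) (annih G) := by
    rw [← Submodule.map_comp, hcomp]
  set P := Submodule.map (projDual n l) (annih G) with hP
  unfold dimProj at hd
  rw [← hP, ← hmap] at hd
  rw [← Subspace.dualAnnihilator_le_dualAnnihilator_iff]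
  intro f hf
  rw [Submodule.mem_dualAnnihilator] at hf ⊢
  have hfG : f ∈ annih G := by
    rw [annih, Submodule.mem_dualAnnihilator]
    exact fun w hw => hf w (Submodule.mem_sup_right hw)
  have hfP : projDual n l f ∈ P := Submodule.mem_map_of_mem hfG
  have hz' : projDual n l f = 0 := by
    refine aux_gen1 res P hd _ hfP ?_
    ext x
    exact hf x (Submodule.mem_sup_left x.2)
  intro w hw
  exact LinearMap.congr_fun hz' ⟨w, hw⟩

/-- Second dimension condition. -/
theorem aux_dim2 {n l : ℕ} (G G' : Set (MP n)) (hGG : G ⊆ G')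
    (hd : dimProj l G = dimProj l G') (p : MP n) (hp : p ∈ RxT n l)
    (hpG : p ∈ Submodule.span ℝ G') : p ∈ Submodule.span ℝ G := by
  have hle : annih G' ≤ annih G :=
    Submodule.dualAnnihilator_anti (Submodule.span_mono hGG)
  have heq : Submodule.map (projDual n l) (annih G') = Submodule.map (projDual n l) (annih G) :=
    Submodule.eq_of_le_of_finrank_eq (Submodule.map_mono hle) hd.symm
  rw [← Subspace.forall_mem_dualAnnihilator_apply_eq_zero_iff]
  intro f hf
  have : projDual n l f ∈ Submodule.map (projDual n l) (annih G') := by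
    rw [heq]
    exact Submodule.mem_map_of_mem hf
  obtain ⟨f', hf', he⟩ := this
  have h1 : f' p = f p := LinearMap.congr_fun he ⟨p, hp⟩
  rw [← h1]
  exact (Submodule.mem_dualAnnihilator f').1 hf' p hpG

theorem aux_X_mul {n : ℕ} (G : Set (MP n)) (i : Fin n) (p : MP n)
    (hp : p ∈ Submodule.span ℝ G) : X i * p ∈ Submodule.span ℝ (plusOp G) := by
  induction hp using Submodule.span_induction with
  | mem x hx =>
    exact Submodule.subset_span (Or.inr (Set.mem_iUnion.2 ⟨i, x, hx, rfl⟩))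
  | zero => simp
  | add x y _ _ hx hy => rw [mul_add]; exact add_mem hx hy
  | smul c x _ hx => rw [mul_smul_comm]; exact Submodule.smul_mem _ c hx

theorem aux_mdeg_add {n : ℕ} (a b : Fin n →₀ ℕ) : mdeg (a + b) = mdeg a + mdeg b :=
  Finsupp.sum_add_index' (fun _ => rfl) (fun _ _ _ => rfl)

theorem aux_mdeg_single {n : ℕ} (i : Fin n) : mdeg (Finsupp.single i 1) = 1 := by
  simp [mdeg]

theorem aux_mul_mem {n k l : ℕ} {p q : MP n} (hp : p ∈ RxT n k) (hq : q ∈ RxT n l) :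
    p * q ∈ RxT n (k + l) := by
  rw [aux_mem_RxT] at *
  exact (totalDegree_mul p q).trans (by omega)

theorem aux_prolong {n s l : ℕ} (G : Set (MP n))
    (hd : dimProj l G = dimProj l (plusOp G))
    (g : MP n) (hg : g ∈ Submodule.span ℝ G) (hgs : g ∈ RxT n s) :
    ∀ (k : ℕ) (a : Fin n →₀ ℕ), mdeg a = k → s + k ≤ l →
      monomial a 1 * g ∈ Submodule.span ℝ G := by
  intro k
  induction k with
  | zero =>
    intro a ha _
    have : a = 0 := by
      ext i
      by_contra hi
      have h1 : a i ≤ mdeg a := by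
        unfold mdeg Finsupp.sum
        exact Finset.single_le_sum (f := fun i => a i) (fun _ _ => Nat.zero_le _)
          (Finsupp.mem_support_iff.2 hi)
      simp at hi
      omega
    subst this
    simpa using hg
  | succ k ih =>
    intro a ha hk
    have hne : a ≠ 0 := by
      rintro rfl
      simp [mdeg] at ha
    obtain ⟨i, hi⟩ := Finsupp.ne_iff.1 hne
    have hle : Finsupp.single i 1 ≤ a := by
      rw [Finsupp.single_le_iff]
      simp at hi
      omega
    obtain ⟨b, rfl⟩ := exists_add_of_le hle
    rw [aux_mdeg_add, aux_mdeg_single] at ha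
    have hb := ih b (by omega) (by omega)
    have hrw : (monomial (Finsupp.single i 1 + b) 1 : MP n) * g = X i * (monomial b 1 * g) := by
      rw [← mul_assoc, X, monomial_mul, mul_one]
    apply aux_dim2 G (plusOp G) Set.subset_union_left hd
    · refine aux_RxT_mono ?_ (aux_mul_mem (aux_mono_mem (le_refl _)) hgs)
      rw [aux_mdeg_add, aux_mdeg_single]
      omega
    · rw [hrw]
      exact aux_X_mul G i _ hb

theorem aux_lin_zero {n k : ℕ} (L : Module.Dual ℝ (MP n)) (g : MP n)
    (hz : ∀ a, mdeg a ≤ k → L (monomial a 1 * g) = 0) (r : MP n) (hr : r ∈ RxT n k) :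
    L (r * g) = 0 := by
  rw [aux_RxT_span] at hr
  induction hr using Submodule.span_induction with
  | mem x hx => obtain ⟨a, ha, rfl⟩ := hx; exact hz a ha
  | zero => simp
  | add x y _ _ hx hy => rw [add_mul, map_add, hx, hy, add_zero]
  | smul c x _ hx => rw [smul_mul_assoc, map_smul, hx, smul_zero]

theorem momRank_eq_and_basis_iff {n m s t : ℕ} (h : Fin m → MP n)
    (hs1 : 1 ≤ s) (hst : s ≤ t / 2)
    (Lstar : Module.Dual ℝ (MP n)) (hgen : Generic h t Lstar)
    (hdim1 : dimProj (2 * s) (Hset h t ∪ Wset h t Lstar) =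
      dimProj (s - 1) (Hset h t ∪ Wset h t Lstar))
    (hdim2 : dimProj (2 * s) (Hset h t ∪ Wset h t Lstar) =
      dimProj (2 * s) (plusOp (Hset h t ∪ Wset h t Lstar))) :
    momRank Lstar s = momRank Lstar (s - 1) ∧
    (∀ B : Set (Fin n →₀ ℕ), (∀ a ∈ B, mdeg a ≤ s - 1) →
      ((spanMon B ⊓ (Submodule.span ℝ (Hset h t ∪ Wset h t Lstar) ⊓ RxT n (s - 1)) = ⊥ ∧
        spanMon B ⊔ (Submodule.span ℝ (Hset h t ∪ Wset h t Lstar) ⊓ RxT n (s - 1)) =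
          RxT n (s - 1)) ↔
       (LinearIndependent ℝ (fun b : B => momCol Lstar (s - 1) ↑b) ∧
        Submodule.span ℝ (momCol Lstar (s - 1) '' B) =
          Submodule.span ℝ (momCol Lstar (s - 1) '' {β | mdeg β ≤ s - 1})))) := by
  obtain ⟨⟨hH, hpsd⟩, -⟩ := hgen
  set G := Hset h t ∪ Wset h t Lstar with hG
  have hLG : ∀ g ∈ Submodule.span ℝ G, Lstar g = 0 := by
    intro g hg
    induction hg using Submodule.span_induction with
    | mem x hx =>
      rcases hx with hx | ⟨a, g, ha, hg, rfl⟩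
      · exact hH x hx
      · rw [mul_comm]; exact hg.2 a ha
    | zero => simp
    | add x y _ _ hx hy => rw [map_add, hx, hy, add_zero]
    | smul c x _ hx => rw [map_smul, hx, smul_zero]
  have hsur : RxT n (2 * s) ≤ RxT n (s - 1) ⊔ Submodule.span ℝ G :=
    aux_dim1 (by omega) G hdim1
  -- products with elements of `G` of degree at most `s` are killed
  have hkill : ∀ g ∈ Submodule.span ℝ G, g ∈ RxT n s → ∀ r ∈ RxT n s, Lstar (r * g) = 0 := by
    intro g hg hgs r hr
    refine aux_lin_zero Lstar g (fun a ha => ?_) r hr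
    exact hLG _ (aux_prolong G hdim2 g hg hgs _ a rfl (by omega))
  have hdec : ∀ r ∈ RxT n s, ∃ q ∈ RxT n (s - 1), ∃ g ∈ Submodule.span ℝ G,
      g ∈ RxT n s ∧ q + g = r := by
    intro r hr
    obtain ⟨q, hq, g, hg, rfl⟩ := Submodule.mem_sup.1 (hsur (aux_RxT_mono (by omega) hr))
    refine ⟨q, hq, g, hg, ?_, rfl⟩
    have h1 : q ∈ RxT n s := aux_RxT_mono (by omega) hq
    exact (Submodule.add_mem_iff_right _ h1).1 hr
  have hss : RxT n (s - 1) ≤ RxT n s := aux_RxT_mono (by omega)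
  constructor
  · set inc := Submodule.inclusion hss with hinc
    have hcomp : momBil Lstar (s - 1) = inc.dualMap ∘ₗ momBil Lstar s ∘ₗ inc := by
      ext p q
      rfl
    have hrange : LinearMap.range (momBil Lstar s ∘ₗ inc) = LinearMap.range (momBil Lstar s) := by
      apply le_antisymm (LinearMap.range_comp_le_range _ _)
      rintro _ ⟨p, rfl⟩
      obtain ⟨q, hq, g, hg, hgs, hqg⟩ := hdec p p.2
      refine ⟨⟨q, hq⟩, ?_⟩
      ext r
      change Lstar (q * r) = Lstar (p * r)
      rw [← hqg, add_mul, map_add, mul_comm g, hkill g hg hgs r r.2, add_zero]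
    have hr2 : LinearMap.range (momBil Lstar (s - 1)) =
        Submodule.map inc.dualMap (LinearMap.range (momBil Lstar s)) := by
      rw [hcomp, LinearMap.range_comp, hrange]
    unfold momRank
    rw [hr2]
    apply aux_gen2
    rintro _ ⟨p, rfl⟩ hz
    ext r
    obtain ⟨q, hq, g, hg, hgs, hqg⟩ := hdec r r.2
    change Lstar (p * r) = 0
    rw [← hqg, mul_add, map_add, hkill g hg hgs p p.2, add_zero]
    exact LinearMap.congr_fun hz ⟨q, hq⟩
  · intro B hB
    set φ : MP n →ₗ[ℝ] ({α : Fin n →₀ ℕ // mdeg α ≤ s - 1} → ℝ) :=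
      LinearMap.pi (fun α => Lstar ∘ₗ LinearMap.mulLeft ℝ (monomial α.1 1)) with hφ
    have hφm : ∀ b, φ (monomial b 1) = momCol Lstar (s - 1) b := by
      intro b
      ext α
      simp [hφ, momCol, monomial_mul]
    have hBR : spanMon B ≤ RxT n (s - 1) := by
      rw [aux_RxT_span]
      exact Submodule.span_mono (Set.image_mono hB)
    have hker : Submodule.span ℝ G ⊓ RxT n (s - 1) = LinearMap.ker φ ⊓ RxT n (s - 1) := by
      ext p
      simp only [Submodule.mem_inf, and_congr_left_iff]
      intro hp
      constructor
      · intro hpG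
        rw [LinearMap.mem_ker]
        ext α
        exact hkill p hpG (hss hp) _ (hss (aux_mono_mem α.2))
      · intro hpk
        have h0 : Lstar (p * p) = 0 :=
          aux_lin_zero Lstar p (fun a ha => congrFun hpk ⟨a, ha⟩) p hp
        have hpt : p ∈ RxT n (t / 2) := aux_RxT_mono (by omega) hp
        apply Submodule.subset_span
        refine Or.inr ⟨0, p, by simp [mdeg], ⟨aux_mem_RxT.1 hpt, fun b hb => ?_⟩, by simp⟩
        exact aux_psd Lstar hpsd p _ hpt (aux_mono_mem hb) h0
    rw [hker]
    have himB : Submodule.span ℝ (momCol Lstar (s - 1) '' B) = Submodule.map φ (spanMon B) := by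
      rw [spanMon, Submodule.map_span, Set.image_image]
      simp only [hφm]
    have himR : Submodule.span ℝ (momCol Lstar (s - 1) '' {β | mdeg β ≤ s - 1}) =
        Submodule.map φ (RxT n (s - 1)) := by
      rw [aux_RxT_span, Submodule.map_span, Set.image_image]
      simp only [hφm]
    rw [himB, himR]
    have hrg : Submodule.span ℝ (Set.range (fun b : B => (monomial (b : Fin n →₀ ℕ) 1 : MP n))) =
        spanMon B := by
      rw [spanMon, Set.image_eq_range]
    have hli : LinearIndependent ℝ (fun b : B => (monomial (b : Fin n →₀ ℕ) 1 : MP n)) := by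
      have h1 := (basisMonomials (Fin n) ℝ).linearIndependent.comp
        (fun b : B => (b : Fin n →₀ ℕ)) Subtype.val_injective
      simpa [Function.comp_def] using h1
    have hcol : (fun b : B => momCol Lstar (s - 1) ↑b) =
        φ ∘ (fun b : B => (monomial (b : Fin n →₀ ℕ) 1 : MP n)) := by
      funext b
      exact (hφm b).symm
    rw [hcol]
    have hdis : spanMon B ⊓ (LinearMap.ker φ ⊓ RxT n (s - 1)) = spanMon B ⊓ LinearMap.ker φ := by
      rw [inf_comm (LinearMap.ker φ), ← inf_assoc, inf_eq_left.2 hBR]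
    rw [hdis]
    apply and_congr
    · rw [← disjoint_iff, ← hrg]
      constructor
      · intro hd
        exact hli.map hd
      · intro hl
        exact Submodule.range_ker_disjoint hl
    · constructor
      · intro he
        apply le_antisymm (Submodule.map_mono hBR)
        rintro _ ⟨p, hp, rfl⟩
        rw [← he] at hp
        obtain ⟨b, hb, k, hk, rfl⟩ := Submodule.mem_sup.1 hp
        refine ⟨b, hb, ?_⟩
        rw [map_add, LinearMap.mem_ker.1 hk.1, add_zero]
      · intro he
        apply le_antisymm (sup_le hBR inf_le_right)
        intro p hp
        have hm : φ p ∈ Submodule.map φ (spanMon B) := by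
          rw [he]; exact Submodule.mem_map_of_mem hp
        obtain ⟨b, hb, hbp⟩ := hm
        refine Submodule.mem_sup.2 ⟨b, hb, p - b, ⟨?_, sub_mem hp (hBR hb)⟩, by abel⟩
        change φ (p - b) = 0
        rw [map_sub, hbp, sub_self]
end
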